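/- Correctness of the bribery reduction (cautious version): in the bribery construction with m < n, the following are equivalent: (i) there exists α : X → Bool such that ψ[α∪β] is true for every β : Y → Bool; (ii) there exists a profile J⃗' obtained from J⃗ = (J₁, J₂, J₃) by replacing at most one of its ballots by a rational ballot, such that for every r*_new ∈ Kemeny(J⃗') and every r*_old ∈ Kemeny(J⃗) it holds that d(r*_new, J₀, w) < d(r*_old, J₀, w). -/

import Mathlib

/-!
The score of a ballot is a sum over the issues, each contributing the number of voters it
contradicts there, so ballots are compared block by block. A ballot satisfying Γ₀ is a status quo
ballot (`Z ∧ T ∧ a`), a refutation (`A ∧ B ∧ a`, encoding α and β with ψ[α∪β] false) or a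
certificate (`A ∧ T ∧ C`, encoding α); only certificates accept `b`-issues.

If every β satisfies ψ[α∪β], replace `J₁` by the certificate for α. Up to the common cost `2u` of
the `u`-issues, that ballot scores `2n + 6m + 8`. A status quo ballot scores `4n + 4m + 7`, which is
more because `m < n`; a refutation encodes some `α' ≠ α`, so it scores at least `2n + 6m + 9`; and a
full `u`-block costs at least `u` more. Hence all new outcomes are certificates, whereas with `J₁`
in place certificates lose to status quo ballots.

If every α is refuted by some β, no replacement of a single ballot helps: two of the voters still
reject every issue outside the `u`-blocks, so turning a certificate into a refutation saves at least
`3m + 4` (on `t` and `b`) and costs at most `3m + 3` (on `y`, `y'` and `a`).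
-/

/-!
Constraint-based judgment aggregation: the bribery construction.
Issues are modelled as an inductive type, ballots as functions `Issue n m → Bool`,
the integrity constraint as a predicate on ballots, and the formula ψ as a Boolean
function of the assignments to X and Y.
-/

namespace Brib

/-- The issues of the bribery construction. -/
inductive Issue (n m : ℕ) : Type
  | x : Fin n → Issue n m
  | x' : Fin n → Issue n m
  | z : Fin n → Issue n m
  | y : Fin m → Issue n m
  | y' : Fin m → Issue n m
  | t : Fin m → Issue n m
  | u : Fin 3 → Fin (10 * n + 10 * m + 10) → Issue n m
  | a : Issue n m
  | b : Fin (2 * m + 4) → Issue n m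
  deriving DecidableEq, Fintype

variable {n m : ℕ}

/-- Hamming distance between two ballots: the number of issues on which they differ. -/
def hamming {I : Type*} [Fintype I] (r r' : I → Bool) : ℕ :=
  (Finset.univ.filter (fun i => r i ≠ r' i)).card

/-- Weighted Hamming distance: the sum of the weights of the issues on which the
two ballots differ. -/
def whamming {I : Type*} [Fintype I] (w : I → ℕ) (r r' : I → Bool) : ℕ :=
  ∑ i ∈ Finset.univ.filter (fun i => r i ≠ r' i), w i

def bigA (r : Issue n m → Bool) : Prop := ∀ i, r (.x i) ≠ r (.x' i)
def bigZ (r : Issue n m → Bool) : Prop := ∀ i, r (.z i) = true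
def bigB (r : Issue n m → Bool) : Prop := ∀ j, r (.y j) ≠ r (.y' j)
def bigT (r : Issue n m → Bool) : Prop := ∀ j, r (.t j) = true
def bigC (r : Issue n m → Bool) : Prop := ∀ j, r (.b j) = true

/-- The part Γ₀ of the integrity constraint. -/
def gamma0 (psi : (Fin n → Bool) → (Fin m → Bool) → Bool) (r : Issue n m → Bool) : Prop :=
  (r .a = true ∨ bigC r) ∧ (r .a = true → ∀ j, r (.b j) = false) ∧
  (bigC r → r .a = false) ∧
  (bigA r ∨ bigZ r) ∧ (bigA r → ∀ i, r (.z i) = false) ∧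
  Xor' (bigB r) (bigT r) ∧ (bigB r → ∀ j, r (.t j) = false) ∧
  (bigZ r → ∀ i, r (.x i) = false ∧ r (.x' i) = false) ∧
  (bigT r → ∀ j, r (.y j) = false ∧ r (.y' j) = false) ∧
  (bigZ r → (r .a = true ∧ bigT r)) ∧
  ((bigA r ∧ bigB r) →
    (psi (fun i => r (.x i)) (fun j => r (.y j)) = false ∧ r .a = true)) ∧
  ((bigA r ∧ bigT r) → bigC r)

/-- A ballot is rational if it satisfies the integrity constraint
`Γ = Γ₀ ∨ ⋁_{i∈[3]} ⋀_{ℓ∈[u]} u_{i,ℓ}`. -/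
def rational (psi : (Fin n → Bool) → (Fin m → Bool) → Bool) (r : Issue n m → Bool) : Prop :=
  gamma0 psi r ∨ ∃ i : Fin 3, ∀ ℓ, r (.u i ℓ) = true

/-- The profile J⃗ = (J₁, J₂, J₃): the ballot J_{k+1} sets exactly the issues
u_{k+1,ℓ} to true. -/
def Jp (k : Fin 3) : Issue n m → Bool := fun i => match i with
  | .u k' _ => k' == k
  | _ => false

/-- The briber's desired ballot J₀: true exactly on the b- and u₁-issues. -/
def Jzero : Issue n m → Bool := fun i => match i with
  | .b _ => true
  | .u k _ => k == 0
  | _ => false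

/-- The briber's weight function: weight 1 on each b-issue, weight 0 elsewhere. -/
def wt : Issue n m → ℕ := fun i => match i with
  | .b _ => 1
  | _ => 0

/-- Cumulative Hamming distance of a ballot to a profile of three ballots. -/
def dist3 (r p1 p2 p3 : Issue n m → Bool) : ℕ :=
  hamming r p1 + hamming r p2 + hamming r p3

/-- Membership in the set of Kemeny outcomes of the profile (p1, p2, p3):
a rational ballot minimizing the cumulative Hamming distance among rational ballots. -/
def kemenyMem (psi : (Fin n → Bool) → (Fin m → Bool) → Bool)
    (p1 p2 p3 r : Issue n m → Bool) : Prop :=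
  rational psi r ∧ ∀ r', rational psi r' → dist3 r p1 p2 p3 ≤ dist3 r' p1 p2 p3

end Brib

namespace Brib

/-! ### Scores as sums over the issues -/

section Score

lemma toNat_xor_eq_ite (v v' : Bool) : (v ^^ v').toNat = if v ≠ v' then 1 else 0 := by
  revert v v'
  decide

variable {ι I : Type*} [Fintype ι]

/-- The dissent against the value `v` on the issue `i`: the number of ballots of the profile `p`
with another value there. In particular `dissent p i false` counts the voters accepting `i`. -/
def dissent (p : ι → I → Bool) (i : I) (v : Bool) : ℕ :=
  (Finset.univ.filter fun k => v ≠ p k i).card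

lemma dissent_fin_three (p : Fin 3 → I → Bool) (i : I) (v : Bool) :
    dissent p i v = (v ^^ p 0 i).toNat + (v ^^ p 1 i).toNat + (v ^^ p 2 i).toNat := by
  simp only [dissent, Finset.card_filter, Fin.sum_univ_three, toNat_xor_eq_ite]

lemma dissent_true_add_dissent_false (p : ι → I → Bool) (i : I) :
    dissent p i true + dissent p i false = Fintype.card ι := by
  have false_ne_iff : ∀ v, false ≠ v ↔ ¬ true ≠ v := by decide
  simp only [dissent, false_ne_iff]
  exact Finset.card_filter_add_card_filter_not _

lemma dissent_le_dissent_add_card_ne [DecidableEq (I → Bool)] (p q : ι → I → Bool) (i : I)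
    (v : Bool) :
    dissent p i v ≤ dissent q i v + (Finset.univ.filter fun k => p k ≠ q k).card := by
  classical
  refine (Finset.card_le_card fun k hk => ?_).trans (Finset.card_union_le _ _)
  by_cases hpq : p k = q k <;> simp_all

variable [Fintype I]

/-- The score of the ballot `r`: its cumulative Hamming distance `Dist` to the profile `p`, for any
finite set of voters. -/
def score (p : ι → I → Bool) (r : I → Bool) : ℕ :=
  ∑ k, hamming r (p k)

lemma score_eq_sum_dissent (p : ι → I → Bool) (r : I → Bool) :
    score p r = ∑ i, dissent p i (r i) := by
  simp only [score, hamming, dissent, Finset.card_filter]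
  exact Finset.sum_comm

lemma score_update_lt_score [DecidableEq I] {p : ι → I → Bool} {r : I → Bool} {i : I} {v : Bool}
    (h : dissent p i v < dissent p i (r i)) : score p (Function.update r i v) < score p r := by
  simp only [score_eq_sum_dissent]
  refine Finset.sum_lt_sum (fun i' _ => ?_) ⟨i, Finset.mem_univ i, by simpa using h⟩
  rcases eq_or_ne i' i with rfl | hne
  · simpa using h.le
  · simp [hne]

lemma hamming_pos {r r' : I → Bool} (h : r ≠ r') : 0 < hamming r r' :=
  hammingDist_pos.2 h

lemma hamming_eq_sum_toNat_xor (r r' : I → Bool) :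
    hamming r r' = ∑ i, (r i ^^ r' i).toNat := by
  simp only [hamming, Finset.card_filter, toNat_xor_eq_ite]

end Score

variable {n m : ℕ}

lemma sum_issue {M : Type*} [AddCommMonoid M] (f : Issue n m → M) :
    ∑ i, f i = ∑ i, (f (.x i) + f (.x' i) + f (.z i)) + ∑ j, (f (.y j) + f (.y' j) + f (.t j)) +
      ∑ k, ∑ l, f (.u k l) + f .a + ∑ j, f (.b j) := by
  rw [← (Issue.proxyTypeEquiv n m).sum_comp]
  simp only [Fintype.sum_sum_type, Fintype.sum_sigma, Finset.sum_add_distrib, Finset.univ_unique,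
    Finset.sum_singleton, add_assoc]
  rfl

/-- The part of the score of a ballot due to the `u`-issues, on which it agrees with `μ`. -/
def uScore (p : Fin 3 → Issue n m → Bool) (μ : Fin 3 → Fin (10 * n + 10 * m + 10) → Bool) : ℕ :=
  ∑ k, ∑ l, dissent p (.u k l) (μ k l)

lemma score_eq_add_uScore (p : Fin 3 → Issue n m → Bool) (r : Issue n m → Bool) :
    score p r =
      ∑ i, (dissent p (.x i) (r (.x i)) + dissent p (.x' i) (r (.x' i)) +
        dissent p (.z i) (r (.z i))) +
      ∑ j, (dissent p (.y j) (r (.y j)) + dissent p (.y' j) (r (.y' j)) +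
        dissent p (.t j) (r (.t j))) +
      dissent p .a (r .a) + ∑ j, dissent p (.b j) (r (.b j)) +
      uScore p fun k l => r (.u k l) := by
  rw [score_eq_sum_dissent, sum_issue, uScore]
  ring

lemma uScore_false_add_le {p : Fin 3 → Issue n m → Bool}
    (hp : ∀ k l, dissent p (.u k l) false < dissent p (.u k l) true)
    (μ : Fin 3 → Fin (10 * n + 10 * m + 10) → Bool) :
    uScore p (fun _ _ => false) + ∑ k, ∑ l, (μ k l).toNat ≤ uScore p μ := by
  simp only [uScore, ← Finset.sum_add_distrib]
  refine Finset.sum_le_sum fun k _ => Finset.sum_le_sum fun l _ => ?_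
  cases μ k l
  · exact le_rfl
  · exact hp k l

lemma whamming_wt_Jzero (r : Issue n m → Bool) :
    whamming wt r Jzero = (Finset.univ.filter fun j => r (.b j) = false).card := by
  rw [whamming, Finset.sum_filter, sum_issue, Finset.card_filter]
  simp only [wt, ite_self, add_zero, Finset.sum_const_zero, zero_add]
  simp [Jzero]

/-! ### Issues rejected by a majority -/

lemma Jp_apply_of_ne_u {i : Issue n m} (hi : ∀ k l, i ≠ .u k l) (k : Fin 3) : Jp k i = false := by
  cases i
  case u k' l => exact absurd rfl (hi k' l)
  all_goals rfl

lemma dissent_Jp {i : Issue n m} (hi : ∀ k l, i ≠ .u k l) (v : Bool) :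
    dissent Jp i v = 3 * v.toNat := by
  cases v <;> simp [dissent, Jp_apply_of_ne_u hi]

/-- The condition that a strict majority of the voters of the profile `p` rejects every issue
outside the `u`-blocks. -/
def RejectsOutsideU (p : Fin 3 → Issue n m → Bool) : Prop :=
  ∀ ⦃i⦄, (∀ k l, i ≠ .u k l) → dissent p i false < dissent p i true

lemma rejectsOutsideU_of_card_ne_Jp_le_one {p : Fin 3 → Issue n m → Bool}
    (hp : (Finset.univ.filter fun k => p k ≠ Jp k).card ≤ 1) : RejectsOutsideU p := by
  intro i hi
  have hJ : dissent Jp i false = 0 := dissent_Jp hi false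
  have hle := dissent_le_dissent_add_card_ne p Jp i false
  have hadd := dissent_true_add_dissent_false p i
  rw [Fintype.card_fin] at hadd
  omega

lemma rejectsOutsideU_Jp : RejectsOutsideU (Jp : Fin 3 → Issue n m → Bool) :=
  rejectsOutsideU_of_card_ne_Jp_le_one (by simp)

/-! ### The three shapes of ballots satisfying Γ₀ -/

/-- The ballot of shape `Z ∧ T ∧ a` whose `u`-issues are given by `μ`. -/
def statusQuo (μ : Fin 3 → Fin (10 * n + 10 * m + 10) → Bool) : Issue n m → Bool
  | .z _ | .t _ | .a => true
  | .u k l => μ k l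
  | _ => false

/-- The ballot of shape `A ∧ B ∧ a` encoding the assignments `α` and `β`, whose `u`-issues are given
by `μ`. It satisfies Γ₀ when `ψ[α∪β]` is false. -/
def refutation (α : Fin n → Bool) (β : Fin m → Bool)
    (μ : Fin 3 → Fin (10 * n + 10 * m + 10) → Bool) : Issue n m → Bool
  | .x i => α i
  | .x' i => !α i
  | .y j => β j
  | .y' j => !β j
  | .a => true
  | .u k l => μ k l
  | _ => false

/-- The ballot of shape `A ∧ T ∧ C` encoding the assignment `α`, whose `u`-issues are given by
`μ`. -/
def certificate (α : Fin n → Bool) (μ : Fin 3 → Fin (10 * n + 10 * m + 10) → Bool) :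
    Issue n m → Bool
  | .x i => α i
  | .x' i => !α i
  | .t _ | .b _ => true
  | .u k l => μ k l
  | _ => false

variable {psi : (Fin n → Bool) → (Fin m → Bool) → Bool}

lemma gamma0_statusQuo [NeZero n] [NeZero m] (μ : Fin 3 → Fin (10 * n + 10 * m + 10) → Bool) :
    gamma0 psi (statusQuo μ) := by
  simp [gamma0, statusQuo, bigA, bigB, bigC, bigT, bigZ, Xor']

lemma gamma0_refutation [NeZero n] [NeZero m] {α : Fin n → Bool} {β : Fin m → Bool}
    (hψ : psi α β = false) (μ : Fin 3 → Fin (10 * n + 10 * m + 10) → Bool) :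
    gamma0 psi (refutation α β μ) := by
  simp [gamma0, refutation, bigA, bigB, bigC, bigT, bigZ, Xor', hψ]

lemma gamma0_certificate [NeZero n] [NeZero m] (α : Fin n → Bool)
    (μ : Fin 3 → Fin (10 * n + 10 * m + 10) → Bool) : gamma0 psi (certificate α μ) := by
  simp [gamma0, certificate, bigA, bigB, bigC, bigT, bigZ, Xor']

lemma eq_statusQuo_or_refutation_or_certificate {r : Issue n m → Bool} (h : gamma0 psi r) :
    (∃ μ, r = statusQuo μ) ∨ (∃ α β μ, psi α β = false ∧ r = refutation α β μ) ∨
      ∃ α μ, r = certificate α μ := by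
  obtain ⟨-, a_imp, C_imp, hAZ, A_imp, hBT, B_imp, Z_imp, T_imp, Z_imp', AB_imp, AT_imp⟩ := h
  have eq_not : ∀ {v w : Bool}, v ≠ w → w = !v := by decide
  rcases hAZ with hA | hZ
  · rcases hBT with ⟨hB, -⟩ | ⟨hT, -⟩
    · obtain ⟨hψ, ha⟩ := AB_imp ⟨hA, hB⟩
      refine .inr (.inl ⟨_, _, fun k l => r (.u k l), hψ, ?_⟩)
      ext (i | i | i | j | j | j | _ | _ | j)
      exacts [rfl, eq_not (hA i), A_imp hA i, rfl, eq_not (hB j), B_imp hB j, rfl, ha, a_imp ha j]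
    · have hC := AT_imp ⟨hA, hT⟩
      refine .inr (.inr ⟨fun i => r (.x i), fun k l => r (.u k l), ?_⟩)
      ext (i | i | i | j | j | j | _ | _ | j)
      exacts [rfl, eq_not (hA i), A_imp hA i, (T_imp hT j).1, (T_imp hT j).2, hT j, rfl, C_imp hC,
        hC j]
  · obtain ⟨ha, hT⟩ := Z_imp' hZ
    refine .inl ⟨fun k l => r (.u k l), ?_⟩
    ext (i | i | i | j | j | j | _ | _ | j)
    exacts [(Z_imp hZ i).1, (Z_imp hZ i).2, hZ i, (T_imp hT j).1, (T_imp hT j).2, hT j, rfl, ha,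
      a_imp ha j]

lemma rational_Jp (k : Fin 3) : rational psi (Jp k : Issue n m → Bool) :=
  .inr ⟨k, fun _ => beq_self_eq_true k⟩

/-! ### Scores before and after the bribe -/

lemma score_refutation_lt_score_certificate {p : Fin 3 → Issue n m → Bool}
    (hp : RejectsOutsideU p) (α : Fin n → Bool) (β : Fin m → Bool)
    (μ : Fin 3 → Fin (10 * n + 10 * m + 10) → Bool) :
    score p (refutation α β μ) < score p (certificate α μ) := by
  have hadd : ∀ i, dissent p i true + dissent p i false = 3 := dissent_true_add_dissent_false p
  have hY : ∑ j, (dissent p (.y j) (β j) + dissent p (.y' j) (!β j) + dissent p (.t j) false) ≤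
      ∑ j, (dissent p (.y j) false + dissent p (.y' j) false + dissent p (.t j) true) +
        ∑ _j : Fin m, 2 := by
    rw [← Finset.sum_add_distrib]
    refine Finset.sum_le_sum fun j _ => ?_
    have hy := hadd (.y j)
    have hy' := hadd (.y' j)
    have ht := hp (i := .t j) nofun
    cases β j <;> simp only [Bool.not_true, Bool.not_false] <;> omega
  have hb : ∑ j, (dissent p (.b j) false + 1) ≤ ∑ j, dissent p (.b j) true :=
    Finset.sum_le_sum fun j _ => hp nofun
  have ha := hadd .a
  rw [Finset.sum_add_distrib] at hb
  simp only [score_eq_add_uScore, refutation, certificate]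
  simp only [Finset.sum_const, Finset.card_fin, smul_eq_mul] at hY hb
  omega

lemma score_Jp_statusQuo_lt_score_Jp_certificate (α : Fin n → Bool)
    (μ : Fin 3 → Fin (10 * n + 10 * m + 10) → Bool) :
    score Jp (statusQuo μ : Issue n m → Bool) < score Jp (certificate α μ) := by
  have hX : ∀ v : Bool, 3 * v.toNat + 3 * (!v).toNat = 3 := by decide
  simp only [score_eq_add_uScore, statusQuo, certificate, ne_eq, reduceCtorEq, not_false_eq_true,
    implies_true, dissent_Jp, hX, Bool.toNat_false, Bool.toNat_true, mul_zero, mul_one, add_zero,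
    zero_add, Finset.sum_const, Finset.card_univ, Fintype.card_fin, smul_eq_mul]
  omega

/-- The bribed profile for the assignment `α`: in J⃗, the ballot `J₁` is replaced by the certificate
for `α` rejecting all `u`-issues. -/
def bribed (α : Fin n → Bool) : Fin 3 → Issue n m → Bool :=
  Function.update Jp 0 (certificate α fun _ _ => false)

lemma bribed_of_ne_zero (α : Fin n → Bool) {k : Fin 3} (hk : k ≠ 0) :
    (bribed α k : Issue n m → Bool) = Jp k :=
  Function.update_of_ne hk ..

lemma card_bribed_ne_Jp_le_one (α : Fin n → Bool) :
    (Finset.univ.filter fun k => (bribed α k : Issue n m → Bool) ≠ Jp k).card ≤ 1 := by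
  refine Finset.card_le_one_iff_subset_singleton.2 ⟨0, fun k hk => Finset.mem_singleton.2 ?_⟩
  contrapose! hk
  simp [bribed_of_ne_zero α hk]

lemma rational_bribed [NeZero n] [NeZero m] (α : Fin n → Bool) (k : Fin 3) :
    rational psi (bribed α k) := by
  rcases eq_or_ne k 0 with rfl | hk
  · exact .inl (gamma0_certificate α fun _ _ => false)
  · exact bribed_of_ne_zero (m := m) α hk ▸ rational_Jp k

lemma dissent_bribed (α : Fin n → Bool) (i : Issue n m) (v : Bool) :
    dissent (bribed α) i v = (v ^^ certificate α (fun _ _ => false) i).toNat +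
      (v ^^ Jp 1 i).toNat + (v ^^ Jp 2 i).toNat :=
  dissent_fin_three (bribed α) i v

lemma dissent_bribed_of_ne_u (α : Fin n → Bool) {i : Issue n m} (hi : ∀ k l, i ≠ .u k l)
    (v : Bool) :
    dissent (bribed α) i v = (v ^^ certificate α (fun _ _ => false) i).toNat + 2 * v.toNat := by
  simp only [dissent_bribed, Jp_apply_of_ne_u hi, Bool.xor_false]
  ring

lemma dissent_bribed_u_false_lt_true (α : Fin n → Bool) (k : Fin 3)
    (l : Fin (10 * n + 10 * m + 10)) :
    dissent (bribed α) (.u k l : Issue n m) false < dissent (bribed α) (.u k l) true := by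
  simp only [dissent_bribed, certificate, Jp]
  fin_cases k <;> decide

lemma score_bribed_certificate (α : Fin n → Bool) :
    score (bribed α) (certificate α fun _ _ => false : Issue n m → Bool) =
      2 * n + 6 * m + 8 + uScore (m := m) (bribed α) fun _ _ => false := by
  have hX : ∀ v : Bool, 2 * v.toNat + 2 * (!v).toNat = 2 := by decide
  simp only [score_eq_add_uScore, certificate, ne_eq, reduceCtorEq, not_false_eq_true,
    implies_true, dissent_bribed_of_ne_u, bne_self_eq_false, hX, Bool.toNat_false, Bool.toNat_true,
    mul_zero, mul_one, add_zero, zero_add, Finset.sum_const, Finset.card_univ, Fintype.card_fin,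
    smul_eq_mul]
  ring

lemma score_bribed_statusQuo (α : Fin n → Bool) (μ : Fin 3 → Fin (10 * n + 10 * m + 10) → Bool) :
    score (bribed α) (statusQuo μ : Issue n m → Bool) =
      4 * n + 4 * m + 7 + uScore (bribed α) μ := by
  have hX : ∀ v : Bool, v.toNat + (!v).toNat = 1 := by decide
  simp only [score_eq_add_uScore, certificate, statusQuo, ne_eq, reduceCtorEq, not_false_eq_true,
    implies_true, dissent_bribed_of_ne_u, bne_self_eq_false, Bool.false_bne, Bool.bne_false,
    Bool.bne_true, Bool.not_false, hX, Bool.toNat_false, Bool.toNat_true, mul_zero, mul_one,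
    add_zero, zero_add, Finset.sum_const, Finset.card_univ, Fintype.card_fin, smul_eq_mul]
  ring

lemma score_bribed_refutation (α α' : Fin n → Bool) (β : Fin m → Bool)
    (μ : Fin 3 → Fin (10 * n + 10 * m + 10) → Bool) :
    score (bribed α) (refutation α' β μ : Issue n m → Bool) =
      2 * n + 6 * m + 7 + 2 * hamming α' α + uScore (bribed α) μ := by
  have hX : ∀ v w : Bool, (v ^^ w).toNat + 2 * v.toNat + ((!v ^^ !w).toNat + 2 * (!v).toNat) =
      2 + 2 * (v ^^ w).toNat := by decide
  have hY : ∀ v : Bool, v.toNat + 2 * v.toNat + ((!v).toNat + 2 * (!v).toNat) + 1 = 4 := by decide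
  simp only [score_eq_add_uScore, certificate, refutation, ne_eq, reduceCtorEq, not_false_eq_true,
    implies_true, dissent_bribed_of_ne_u, bne_self_eq_false, Bool.bne_false, Bool.bne_true,
    Bool.not_false, hX, hY, hamming_eq_sum_toNat_xor, Bool.toNat_false, Bool.toNat_true, mul_zero,
    mul_one, add_zero, Finset.sum_add_distrib, ← Finset.mul_sum, Finset.sum_const,
    Finset.card_univ, Fintype.card_fin, smul_eq_mul]
  ring

/-! ### Kemeny outcomes -/

lemma score_eq_dist3 (p : Fin 3 → Issue n m → Bool) (r : Issue n m → Bool) :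
    score p r = dist3 r (p 0) (p 1) (p 2) :=
  Fin.sum_univ_three _

lemma exists_kemenyMem (psi : (Fin n → Bool) → (Fin m → Bool) → Bool)
    (p₁ p₂ p₃ : Issue n m → Bool) : ∃ r, kemenyMem psi p₁ p₂ p₃ r :=
  Set.exists_min_image {r | rational psi r} (fun r => dist3 r p₁ p₂ p₃) (Set.toFinite _)
    ⟨Jp 0, rational_Jp 0⟩

variable {p : Fin 3 → Issue n m → Bool} {r : Issue n m → Bool}

lemma kemenyMem.score_le {r' : Issue n m → Bool} (hr : kemenyMem psi (p 0) (p 1) (p 2) r)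
    (hr' : rational psi r') : score p r ≤ score p r' := by
  simpa only [score_eq_dist3] using hr.2 r' hr'

lemma kemenyMem.eq_certificate_or_b_eq_false (hp : RejectsOutsideU p)
    (hr : kemenyMem psi (p 0) (p 1) (p 2) r) :
    (∃ α μ, r = certificate α μ) ∨ ∀ j, r (.b j) = false := by
  rcases hr.1 with hΓ | ⟨k, hk⟩
  · rcases eq_statusQuo_or_refutation_or_certificate hΓ with ⟨μ, rfl⟩ | ⟨α, β, μ, -, rfl⟩ | h
    exacts [.inr fun _ => rfl, .inr fun _ => rfl, .inl h]
  · refine .inr fun j => by_contra fun hj => ?_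
    -- A full `u`-block satisfies Γ by itself, so the accepted issue can be dropped.
    have drop : rational psi (Function.update r (.b j) false) :=
      .inr ⟨k, fun l => by simpa using hk l⟩
    refine (score_update_lt_score ?_).not_ge (hr.score_le drop)
    simpa [Bool.eq_true_of_not_eq_false hj] using hp (i := .b j) nofun

lemma kemenyMem.b_eq_false_of_forall_exists_refutation [NeZero n] [NeZero m]
    (hp : RejectsOutsideU p) (hψ : ∀ α, ∃ β, psi α β = false)
    (hr : kemenyMem psi (p 0) (p 1) (p 2) r) (j : Fin (2 * m + 4)) :
    r (.b j) = false := by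
  rcases hr.eq_certificate_or_b_eq_false hp with ⟨α, μ, rfl⟩ | h
  · obtain ⟨β, hβ⟩ := hψ α
    exact absurd (hr.score_le (.inl (gamma0_refutation hβ μ)))
      (score_refutation_lt_score_certificate hp α β μ).not_ge
  · exact h j

lemma kemenyMem.b_eq_false_of_Jp [NeZero n] [NeZero m]
    (hr : kemenyMem psi (Jp 0) (Jp 1) (Jp 2) r) (j : Fin (2 * m + 4)) : r (.b j) = false := by
  rcases hr.eq_certificate_or_b_eq_false rejectsOutsideU_Jp with ⟨α, μ, rfl⟩ | h
  · exact absurd (hr.score_le (.inl (gamma0_statusQuo μ)))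
      (score_Jp_statusQuo_lt_score_Jp_certificate α μ).not_ge
  · exact h j

lemma kemenyMem.eq_certificate_of_bribed [NeZero n] [NeZero m] {α : Fin n → Bool} (hmn : m < n)
    (hα : ∀ β, psi α β = true) (hr : kemenyMem psi (bribed α 0) (bribed α 1) (bribed α 2) r) :
    ∃ α' μ, r = certificate α' μ := by
  have hle := hr.score_le (.inl (gamma0_certificate α fun _ _ => false))
  rw [score_bribed_certificate] at hle
  have hu := uScore_false_add_le (dissent_bribed_u_false_lt_true (m := m) α)
  rcases hr.1 with hΓ | ⟨k, hk⟩
  · rcases eq_statusQuo_or_refutation_or_certificate hΓ with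
      ⟨μ, rfl⟩ | ⟨α', β, μ, hψ, rfl⟩ | h
    · rw [score_bribed_statusQuo] at hle
      have := hu μ
      omega
    · have hne : α' ≠ α := by
        rintro rfl
        simp [hα] at hψ
      rw [score_bribed_refutation] at hle
      have := hamming_pos hne
      have := hu μ
      omega
    · exact h
  · have hblock : 10 * n + 10 * m + 10 ≤ ∑ k, ∑ l, (r (.u k l)).toNat :=
      calc
        10 * n + 10 * m + 10 = ∑ l, (r (.u k l)).toNat := by
          simp only [hk, Bool.toNat_true, Finset.sum_const, Finset.card_fin, smul_eq_mul, mul_one]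
        _ ≤ _ := Finset.single_le_sum (f := fun k => ∑ l, (r (.u k l)).toNat)
          (fun _ _ => Nat.zero_le _) (Finset.mem_univ k)
    rw [score_eq_add_uScore] at hle
    have := hu fun k l => r (.u k l)
    omega

end Brib

open Brib in
/-- correctness of the cautious bribery reduction: with m < n,
there exists α with ψ[α∪β] true for every β
iff
one can replace at most one ballot of J⃗ = (J₁, J₂, J₃) by a rational ballot, obtaining
a profile J⃗', such that every Kemeny outcome of J⃗' is strictly closer to J₀
(in weighted Hamming distance w) than every Kemeny outcome of J⃗. -/
theorem brib_reduction_correct (n m : ℕ) (hn : 0 < n) (hm : 0 < m) (hmn : m < n)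
    (psi : (Fin n → Bool) → (Fin m → Bool) → Bool) :
    (∃ α : Fin n → Bool, ∀ β : Fin m → Bool, psi α β = true) ↔
    (∃ J' : Fin 3 → Issue n m → Bool,
      (∀ k, rational psi (J' k)) ∧
      (Finset.univ.filter (fun k : Fin 3 => J' k ≠ Jp k)).card ≤ 1 ∧
      (∀ rnew : Issue n m → Bool, kemenyMem psi (J' 0) (J' 1) (J' 2) rnew →
        ∀ rold : Issue n m → Bool, kemenyMem psi (Jp 0) (Jp 1) (Jp 2) rold →
          whamming wt rnew Jzero < whamming wt rold Jzero)) := by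
  have : NeZero n := .of_pos hn
  have : NeZero m := .of_pos hm
  constructor
  · rintro ⟨α, hα⟩
    refine ⟨bribed α, rational_bribed α, card_bribed_ne_Jp_le_one α, fun rnew hnew rold hold => ?_⟩
    obtain ⟨α', μ, rfl⟩ := hnew.eq_certificate_of_bribed hmn hα
    simp [whamming_wt_Jzero, hold.b_eq_false_of_Jp, certificate]
  · rintro ⟨J', -, hcard, hlt⟩
    by_contra! hψ
    obtain ⟨rnew, hnew⟩ := exists_kemenyMem psi (J' 0) (J' 1) (J' 2)
    obtain ⟨rold, hold⟩ := exists_kemenyMem psi (Jp 0) (Jp 1) (Jp 2)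
    have hrej := rejectsOutsideU_of_card_ne_Jp_le_one hcard
    have hb := hnew.b_eq_false_of_forall_exists_refutation hrej (by simpa using hψ)
    have := hlt rnew hnew rold hold
    simp [whamming_wt_Jzero, hb, hold.b_eq_false_of_Jp] at this
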